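/- No deterministic online algorithm for online unit-length busy time scheduling on heterogeneous machines has competitive ratio less than 2: for every ε > 0 there is an even integer M and a machine configuration with exactly two types — type 0 with cost 1 and capacity 1, and type 1 with cost M and capacity M³ — such that for every deterministic online algorithm A there exists an instance J with agreeable deadlines satisfying cost(A(J)) ≥ (2 − ε)·OPT(J). -/

import Mathlib

structure SchedInstance where
  jobs : Finset ℕ
  r : ℕ → ℤ
  d : ℕ → ℤ
  window : ∀ j ∈ jobs, r j ≤ d j

structure Batch where
  btype : ℕ
  time : ℤ
  bjobs : Finset ℕ
deriving DecidableEq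

/-- A valid schedule when there are exactly two machine types (types 0 and 1). -/
def ValidSchedule2 (B : ℕ → ℕ) (P : SchedInstance) (S : Finset Batch) : Prop :=
  (∀ X ∈ S, X.btype < 2) ∧
  (∀ X ∈ S, X.bjobs.card ≤ B X.btype) ∧
  (∀ X ∈ S, ∀ j ∈ X.bjobs, j ∈ P.jobs ∧ P.r j ≤ X.time ∧ X.time ≤ P.d j) ∧
  (∀ X ∈ S, ∀ Y ∈ S, X ≠ Y → Disjoint X.bjobs Y.bjobs) ∧
  (∀ j ∈ P.jobs, ∃ X ∈ S, j ∈ X.bjobs)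

noncomputable def schedCost (c : ℕ → ℝ) (S : Finset Batch) : ℝ :=
  ∑ X ∈ S, c X.btype

noncomputable def OPT2 (c : ℕ → ℝ) (B : ℕ → ℕ) (P : SchedInstance) : ℝ :=
  sInf {x : ℝ | ∃ S : Finset Batch, ValidSchedule2 B P S ∧ schedCost c S = x}

def Agreeable (P : SchedInstance) : Prop :=
  ∀ j ∈ P.jobs, ∀ j' ∈ P.jobs, P.r j < P.r j' → P.d j ≤ P.d j'

def Causal (A : SchedInstance → Finset Batch) : Prop :=
  ∀ P P' : SchedInstance, ∀ τ : ℤ,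
    P.jobs.filter (fun j => P.r j ≤ τ) = P'.jobs.filter (fun j => P'.r j ≤ τ) →
    (∀ j ∈ P.jobs.filter (fun j => P.r j ≤ τ), P.r j = P'.r j ∧ P.d j = P'.d j) →
    (A P).filter (fun X => X.time ≤ τ) = (A P').filter (fun X => X.time ≤ τ)

/-- Capacities of the two machine types. -/
abbrev twoTypeCap (M : ℕ) : ℕ → ℕ := fun k => if k = 0 then 1 else M ^ 3

/-- Costs of the two machine types. -/
noncomputable abbrev twoTypeCost (M : ℕ) : ℕ → ℝ := fun k => if k = 0 then (1 : ℝ) else (M : ℝ)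

theorem twoTypeCost_nonneg (M k : ℕ) : 0 ≤ twoTypeCost M k := by
  unfold twoTypeCost
  split_ifs <;> positivity

theorem OPT2_le_schedCost {M : ℕ} {B : ℕ → ℕ} {P : SchedInstance} {S : Finset Batch}
    (hS : ValidSchedule2 B P S) : OPT2 (twoTypeCost M) B P ≤ schedCost (twoTypeCost M) S := by
  refine csInf_le ⟨0, ?_⟩ ⟨S, hS, rfl⟩
  rintro x ⟨S, -, rfl⟩
  exact Finset.sum_nonneg fun X _ => twoTypeCost_nonneg M X.btype

theorem OPT2_nonneg (M : ℕ) (B : ℕ → ℕ) (P : SchedInstance) :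
    0 ≤ OPT2 (twoTypeCost M) B P := by
  refine Real.sInf_nonneg ?_
  rintro x ⟨S, -, rfl⟩
  exact Finset.sum_nonneg fun X _ => twoTypeCost_nonneg M X.btype

/-- Running the jobs of `W` alone at their deadlines and every other job `j` in a large batch
with key `key j`, executed at time `ρ (key j)`, bounds the optimum. -/
theorem OPT2_le_of_assignment {M : ℕ} (P : SchedInstance) (W T : Finset ℕ) (key : ℕ → ℕ)
    (ρ : ℕ → ℤ) (hW : W ⊆ P.jobs)
    (hkey : ∀ j ∈ P.jobs, j ∉ W → key j ∈ T ∧ P.r j ≤ ρ (key j) ∧ ρ (key j) ≤ P.d j)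
    (hcap : ∀ i ∈ T, (P.jobs.filter fun j => key j = i).card ≤ M ^ 3) :
    OPT2 (twoTypeCost M) (twoTypeCap M) P ≤ W.card + M * T.card := by
  classical
  let small : ℕ → Batch := fun j => ⟨0, P.d j, {j}⟩
  let large : ℕ → Batch := fun i => ⟨1, ρ i, P.jobs.filter fun j => j ∉ W ∧ key j = i⟩
  have hmem : ∀ X, X ∈ W.image small ∪ T.image large ↔
      (∃ j ∈ W, small j = X) ∨ ∃ i ∈ T, large i = X := by
    intro X
    simp only [Finset.mem_union, Finset.mem_image]
  have hvalid : ValidSchedule2 (twoTypeCap M) P (W.image small ∪ T.image large) := by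
    refine ⟨?_, ?_, ?_, ?_, ?_⟩
    · intro X hX
      rcases (hmem X).1 hX with ⟨j, -, rfl⟩ | ⟨i, -, rfl⟩ <;> simp [small, large]
    · intro X hX
      rcases (hmem X).1 hX with ⟨j, -, rfl⟩ | ⟨i, hi, rfl⟩
      · simp [small, twoTypeCap]
      · refine le_trans (Finset.card_le_card fun j hj => ?_) (hcap i hi)
        simp only [large, Finset.mem_filter] at hj ⊢
        exact ⟨hj.1, hj.2.2⟩
    · intro X hX j hj
      rcases (hmem X).1 hX with ⟨j', hj', rfl⟩ | ⟨i, hi, rfl⟩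
      · obtain rfl : j = j' := by simpa [small] using hj
        exact ⟨hW hj', P.window j (hW hj'), le_rfl⟩
      · simp only [large, Finset.mem_filter] at hj
        obtain ⟨hjP, hjW, rfl⟩ := hj
        exact ⟨hjP, (hkey j hjP hjW).2⟩
    · intro X hX Y hY hXY
      rw [Finset.disjoint_left]
      intro j hjX hjY
      apply hXY
      rcases (hmem X).1 hX with ⟨a, ha, rfl⟩ | ⟨a, ha, rfl⟩ <;>
        rcases (hmem Y).1 hY with ⟨b, hb, rfl⟩ | ⟨b, hb, rfl⟩ <;>
        simp only [small, large, Finset.mem_filter, Finset.mem_singleton] at hjX hjY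
      · rw [← hjX, ← hjY]
      · exact absurd (hjX ▸ ha) hjY.2.1
      · exact absurd (hjY ▸ hb) hjX.2.1
      · rw [← hjX.2.2, ← hjY.2.2]
    · intro j hj
      by_cases hjW : j ∈ W
      · exact ⟨small j, (hmem _).2 (Or.inl ⟨j, hjW, rfl⟩), by simp [small]⟩
      · exact ⟨large (key j), (hmem _).2 (Or.inr ⟨_, (hkey j hj hjW).1, rfl⟩),
          by simp [large, hj, hjW]⟩
  have hdisj : Disjoint (W.image small) (T.image large) := by
    rw [Finset.disjoint_left]
    intro X hX hY
    obtain ⟨j, -, rfl⟩ := Finset.mem_image.1 hX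
    obtain ⟨i, -, hi⟩ := Finset.mem_image.1 hY
    simpa [small, large] using congrArg Batch.btype hi
  refine (OPT2_le_schedCost hvalid).trans ?_
  rw [schedCost, Finset.sum_union hdisj]
  have h1 : ∑ X ∈ W.image small, twoTypeCost M X.btype ≤ W.card := by
    rw [Finset.sum_congr rfl (g := fun _ => (1 : ℝ))]
    · simpa using Finset.card_image_le
    · intro X hX
      obtain ⟨j, -, rfl⟩ := Finset.mem_image.1 hX
      simp [small]
  have h2 : ∑ X ∈ T.image large, twoTypeCost M X.btype ≤ M * T.card := by
    rw [Finset.sum_congr rfl (g := fun _ => (M : ℝ))]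
    · rw [Finset.sum_const, nsmul_eq_mul, mul_comm]
      gcongr
      exact Finset.card_image_le
    · intro X hX
      obtain ⟨j, -, rfl⟩ := Finset.mem_image.1 hX
      simp [large]
  exact add_le_add h1 h2

/-- Jobs that are run alone cost `1` each, and every time carrying a large batch costs `M`. -/
theorem le_schedCost {M : ℕ} {P : SchedInstance} {S : Finset Batch}
    (hS : ValidSchedule2 (twoTypeCap M) P S) (K : Finset ℕ) (T : Finset ℤ) (hK : K ⊆ P.jobs)
    (hsmall : ∀ X ∈ S, ∀ j ∈ K, j ∈ X.bjobs → X.btype = 0)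
    (hlarge : ∀ t ∈ T, ∃ X ∈ S, X.btype = 1 ∧ X.time = t) :
    (K.card : ℝ) + M * T.card ≤ schedCost (twoTypeCost M) S := by
  classical
  obtain ⟨-, hcap, -, -, hcover⟩ := hS
  have : Nonempty Batch := ⟨⟨0, 0, ∅⟩⟩
  have hKS : K.card ≤ (S.filter fun X => X.btype = 0).card := by
    choose! f hfS hf using fun j (hj : j ∈ K) => hcover j (hK hj)
    refine Finset.card_le_card_of_injOn f (fun j hj => ?_) fun a ha b hb hab => ?_
    · exact Finset.mem_coe.2 (Finset.mem_filter.2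
        ⟨hfS j hj, hsmall _ (hfS j hj) j hj (hf j hj)⟩)
    · have hc := hcap _ (hfS a ha)
      rw [twoTypeCap, if_pos (hsmall _ (hfS a ha) a ha (hf a ha))] at hc
      exact Finset.card_le_one.1 hc a (hf a ha) b (hab ▸ hf b hb)
  have hTS : T.card ≤ (S.filter fun X => ¬ X.btype = 0).card := by
    choose! f hfS hf1 hft using hlarge
    refine Finset.card_le_card_of_injOn f (fun t ht => ?_) fun a ha b hb hab => ?_
    · exact Finset.mem_coe.2 (Finset.mem_filter.2 ⟨hfS t ht, by simp [hf1 t ht]⟩)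
    · rw [← hft a ha, ← hft b hb, hab]
  rw [schedCost, Finset.sum_ite, Finset.sum_const, Finset.sum_const, nsmul_eq_mul, nsmul_eq_mul,
    mul_one, mul_comm (M : ℝ)]
  gcongr

theorem Causal.mem_iff {A : SchedInstance → Finset Batch} (hA : Causal A) {P P' : SchedInstance}
    {τ : ℤ}
    (hjobs : P.jobs.filter (fun j => P.r j ≤ τ) = P'.jobs.filter (fun j => P'.r j ≤ τ))
    (hrd : ∀ j ∈ P.jobs, P.r j ≤ τ → P.r j = P'.r j ∧ P.d j = P'.d j)
    {X : Batch} (hX : X.time ≤ τ) : X ∈ A P ↔ X ∈ A P' := by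
  have h := hA P P' τ hjobs fun j hj =>
    hrd j (Finset.mem_filter.1 hj).1 (Finset.mem_filter.1 hj).2
  have := Finset.ext_iff.1 h X
  simpa [hX] using this

/-- The instance with `n` phases of `N` jobs each: job `j` belongs to phase `j / N`, is released
at `R (j / N)` and has deadline `j`. -/
def phaseInstance (N : ℕ) (R : ℕ → ℤ) (hR : ∀ i, R i ≤ (i * N : ℕ)) (n : ℕ) : SchedInstance where
  jobs := Finset.range (n * N)
  r j := R (j / N)
  d j := j
  window j _ := (hR (j / N)).trans (by exact_mod_cast Nat.div_mul_le_self j N)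

theorem agreeable_phaseInstance {N : ℕ} {R : ℕ → ℤ} (hR : ∀ i, R i ≤ (i * N : ℕ))
    (hmono : Monotone R) (n : ℕ) : Agreeable (phaseInstance N R hR n) := by
  intro j _ j' _ h
  by_contra! hlt
  have hlt' : j' < j := by simpa [phaseInstance] using hlt
  exact absurd h (not_lt.2 (hmono (Nat.div_le_div_right hlt'.le)))

/-- On the instance with `n` phases, the first large batch of `A` executed at or after `R i`
is executed at `R (i + 1) - 1`, for every phase `i`. -/
structure LargeBatchPattern (A : SchedInstance → Finset Batch) (N : ℕ) (R : ℕ → ℤ) (n : ℕ) :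
    Prop where
  mono : Monotone R
  le : ∀ i, R i ≤ (i * N : ℕ)
  lt : ∀ i < n, R i < R (i + 1)
  large : ∀ i < n, ∃ X ∈ A (phaseInstance N R le n), X.btype = 1 ∧ X.time = R (i + 1) - 1
  small : ∀ i < n, ∀ X ∈ A (phaseInstance N R le n),
    R i ≤ X.time → X.time < R (i + 1) - 1 → X.btype = 0

theorem card_filter_phase_le (N m i : ℕ) (hN : 0 < N) :
    ((Finset.range m).filter fun j => j / N = i).card ≤ N := by
  calc _ ≤ (Finset.Ico (i * N) (i * N + N)).card := by
        refine Finset.card_le_card fun j hj => ?_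
        have hj' := (Nat.div_eq_iff hN).1 (Finset.mem_filter.1 hj).2
        rw [Finset.mem_Ico]
        omega
    _ = N := by simp

theorem OPT2_phaseInstance_le {M N : ℕ} {R : ℕ → ℤ} (hR : ∀ i, R i ≤ (i * N : ℕ)) (n : ℕ)
    (hN : 0 < N) (hNM : N ≤ M ^ 3) :
    OPT2 (twoTypeCost M) (twoTypeCap M) (phaseInstance N R hR n) ≤ M * n := by
  have h := OPT2_le_of_assignment (M := M) (phaseInstance N R hR n) ∅ (Finset.range n)
    (fun j => j / N) R (by simp)
    (fun j hj _ => ⟨?_, le_rfl, (phaseInstance N R hR n).window j hj⟩)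
    (fun i _ => (card_filter_phase_le N _ i hN).trans hNM)
  · simpa using h
  · exact Finset.mem_range.2 ((Nat.div_lt_iff_lt_mul hN).2 (Finset.mem_range.1 hj))

/-- Either the pattern extends to one more phase, or all jobs of the new phase are run alone. -/
theorem LargeBatchPattern.step {A : SchedInstance → Finset Batch} {M N n : ℕ} {R : ℕ → ℤ}
    (hA : Causal A) (hvalid : ∀ P, ValidSchedule2 (twoTypeCap M) P (A P)) (hN : 0 < N)
    (h : LargeBatchPattern A N R n) :
    (∃ R', LargeBatchPattern A N R' (n + 1)) ∨
      (N : ℝ) ≤ schedCost (twoTypeCost M) (A (phaseInstance N R h.le (n + 1))) := by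
  classical
  have hdiv : ∀ {j m : ℕ}, j < m * N → j / N < m := fun hj => (Nat.div_lt_iff_lt_mul hN).2 hj
  have hpast : ∀ X : Batch, X.time ≤ R n - 1 →
      (X ∈ A (phaseInstance N R h.le n) ↔ X ∈ A (phaseInstance N R h.le (n + 1))) := by
    intro X hX
    refine hA.mem_iff (P := phaseInstance N R h.le n) (P' := phaseInstance N R h.le (n + 1)) ?_
      (fun j _ _ => ⟨rfl, rfl⟩) hX
    ext j
    rw [Finset.mem_filter, Finset.mem_filter]
    simp only [phaseInstance, Finset.mem_range]
    refine ⟨fun hj => ⟨hj.1.trans_le (by gcongr; omega), hj.2⟩, fun hj => ⟨?_, hj.2⟩⟩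
    by_contra! hge
    have := h.mono ((Nat.le_div_iff_mul_le hN).2 hge)
    omega
  by_cases hex : ∃ m : ℕ, ∃ X ∈ A (phaseInstance N R h.le (n + 1)),
      X.btype = 1 ∧ X.time = R n + m ∧ X.time < ((n + 1) * N : ℕ)
  · left
    obtain ⟨X, hXA, hX1, hXt, hXlt⟩ := Nat.find_spec hex
    set m := Nat.find hex
    let R' : ℕ → ℤ := fun i => if i ≤ n then R i else R n + m + 1
    have hR'le : ∀ {i}, i ≤ n → R' i = R i := fun hi => if_pos hi
    have hR'succ : R' (n + 1) = R n + m + 1 := if_neg (by omega)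
    have hmono' : Monotone R' := by
      intro a b hab
      by_cases hb : b ≤ n
      · rw [hR'le hb, hR'le (hab.trans hb)]
        exact h.mono hab
      · by_cases ha : a ≤ n
        · have := h.mono ha
          simp only [R', if_pos ha, if_neg hb]
          omega
        · simp only [R', if_neg ha, if_neg hb, le_refl]
    have hle' : ∀ i, R' i ≤ (i * N : ℕ) := by
      intro i
      by_cases hi : i ≤ n
      · rw [hR'le hi]
        exact h.le i
      · simp only [R', if_neg hi]
        have : (n + 1) * N ≤ i * N := by gcongr; omega
        omega
    have hsame : ∀ X : Batch, X ∈ A (phaseInstance N R h.le (n + 1)) ↔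
        X ∈ A (phaseInstance N R' hle' (n + 1)) := by
      intro X
      have hr : ∀ j < (n + 1) * N, R (j / N) = R' (j / N) := fun j hj =>
        (hR'le (Nat.lt_succ_iff.1 (hdiv hj))).symm
      refine hA.mem_iff (P := phaseInstance N R h.le (n + 1))
        (P' := phaseInstance N R' hle' (n + 1)) (τ := X.time) ?_
        (fun j hj _ => ⟨hr j (Finset.mem_range.1 hj), rfl⟩) le_rfl
      refine Finset.filter_congr fun j hj => ?_
      simp only [phaseInstance]
      rw [hr j (Finset.mem_range.1 hj)]
    refine ⟨R', hmono', hle', ?_, ?_, ?_⟩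
    · intro i hi
      rcases Nat.lt_succ_iff_lt_or_eq.1 hi with hi | rfl
      · rw [hR'le hi.le, hR'le hi]
        exact h.lt i hi
      · rw [hR'le le_rfl, hR'succ]
        omega
    · intro i hi
      rcases Nat.lt_succ_iff_lt_or_eq.1 hi with hi | rfl
      · obtain ⟨Y, hYA, hY1, hYt⟩ := h.large i hi
        have := h.mono (show i + 1 ≤ n from hi)
        refine ⟨Y, (hsame Y).1 ((hpast Y (by omega)).1 hYA), hY1, ?_⟩
        rw [hR'le hi]
        exact hYt
      · exact ⟨X, (hsame X).1 hXA, hX1, by rw [hR'succ]; omega⟩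
    · intro i hi Y hY hY1 hY2
      rw [← hsame] at hY
      rcases Nat.lt_succ_iff_lt_or_eq.1 hi with hi | rfl
      · rw [hR'le hi.le] at hY1
        rw [hR'le (show i + 1 ≤ n from hi)] at hY2
        have := h.mono (show i + 1 ≤ n from hi)
        exact h.small i hi Y ((hpast Y (by omega)).2 hY) hY1 hY2
      · rw [hR'le le_rfl] at hY1
        rw [hR'succ] at hY2
        by_contra hne
        have hlt2 := (hvalid _).1 Y hY
        have hlt : (Y.time - R i).toNat < Nat.find hex := by omega
        exact Nat.find_min hex hlt ⟨Y, hY, by omega, by omega, by omega⟩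
  · right
    have hcost := le_schedCost (hvalid (phaseInstance N R h.le (n + 1)))
      (Finset.Ico (n * N) ((n + 1) * N)) ∅ ?_ ?_ (by simp)
    · have hcard : (n + 1) * N - n * N = N := by rw [add_mul, one_mul]; omega
      simpa [hcard] using hcost
    · intro j hj
      exact Finset.mem_range.2 (Finset.mem_Ico.1 hj).2
    · intro X hX j hj hjX
      rw [Finset.mem_Ico] at hj
      obtain ⟨-, hrX, hXd⟩ := (hvalid _).2.2.1 X hX j hjX
      have hjn : j / N = n := by
        have := hdiv hj.2
        have := (Nat.le_div_iff_mul_le hN).2 hj.1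
        omega
      simp only [phaseInstance, hjn] at hrX hXd
      by_contra hne
      have hlt2 := (hvalid _).1 X hX
      exact hex ⟨(X.time - R n).toNat, X, hX, by omega, by omega, by omega⟩

/-- With `n` phases of the pattern, twice the optimum exceeds the cost of the algorithm by at most
`n + M`, the two schedules that place large batches at every other release being good on average. -/
theorem LargeBatchPattern.two_mul_OPT2_le {A : SchedInstance → Finset Batch} {M N n : ℕ}
    {R : ℕ → ℤ} (hvalid : ∀ P, ValidSchedule2 (twoTypeCap M) P (A P)) (hN : 0 < N)
    (hNM : 2 * N ≤ M ^ 3) (h : LargeBatchPattern A N R n) :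
    2 * OPT2 (twoTypeCost M) (twoTypeCap M) (phaseInstance N R h.le n) ≤
        schedCost (twoTypeCost M) (A (phaseInstance N R h.le n)) + n + M ∧
      (M : ℝ) * n ≤ schedCost (twoTypeCost M) (A (phaseInstance N R h.le n)) := by
  classical
  have hdiv : ∀ {j m : ℕ}, j < m * N → j / N < m := fun hj => (Nat.div_lt_iff_lt_mul hN).2 hj
  -- jobs due strictly before, respectively no later than, the large batch of their phase
  set K := (Finset.range (n * N)).filter fun j : ℕ => (j : ℤ) < R (j / N + 1) - 1 with hKdef
  set K' := (Finset.range (n * N)).filter fun j : ℕ => (j : ℤ) < R (j / N + 1) with hK'def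
  have hcost := le_schedCost (hvalid (phaseInstance N R h.le n)) K
    ((Finset.range n).image fun i => R (i + 1) - 1) (Finset.filter_subset _ _) ?_ ?_
  rotate_left
  · intro X hX j hj hjX
    obtain ⟨hjn, hjR⟩ := Finset.mem_filter.1 hj
    obtain ⟨-, hrX, hXd⟩ := (hvalid _).2.2.1 X hX j hjX
    simp only [phaseInstance] at hrX hXd
    exact h.small _ (hdiv (Finset.mem_range.1 hjn)) X hX hrX (by omega)
  · intro t ht
    obtain ⟨i, hi, rfl⟩ := Finset.mem_image.1 ht
    exact h.large i (Finset.mem_range.1 hi)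
  have hTcard : ((Finset.range n).image fun i => R (i + 1) - 1).card = n := by
    rw [Finset.card_image_of_injOn, Finset.card_range]
    have key : ∀ a b, a < b → b < n → R (a + 1) < R (b + 1) := fun a b hab hb =>
      (h.mono (Nat.succ_le_iff.2 hab)).trans_lt (h.lt b hb)
    intro a ha b hb hab
    simp only [Finset.coe_range, Set.mem_Iio] at ha hb
    rcases lt_trichotomy a b with hlt | heq | hlt
    · have := key a b hlt hb
      simp only at hab
      omega
    · exact heq
    · have := key b a hlt ha
      simp only at hab
      omega
  rw [hTcard] at hcost
  have hK' : K'.card ≤ K.card + n := by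
    have hsub : (K' \ K).card ≤ (Finset.range n).card := by
      refine Finset.card_le_card_of_injOn (fun j => j / N) ?_ ?_
      · intro j hj
        simp only [hK'def, Finset.coe_sdiff, Set.mem_sdiff, Finset.mem_coe, Finset.mem_filter,
          Finset.mem_range] at hj
        exact Finset.mem_coe.2 (Finset.mem_range.2 (hdiv hj.1.1))
      · intro a ha b hb hab
        simp only [hK'def, hKdef, Finset.coe_sdiff, Set.mem_sdiff, Finset.mem_coe,
          Finset.mem_filter, Finset.mem_range, not_and, not_lt] at ha hb hab
        have h1 := ha.2 ha.1.1
        have h2 := hb.2 hb.1.1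
        have h3 := ha.1.2
        have h4 := hb.1.2
        rw [hab] at h1 h3
        omega
    rw [Finset.card_range] at hsub
    have := Finset.card_le_card_sdiff_add_card (s := K') (t := K)
    omega
  have hopt : ∀ p < 2, OPT2 (twoTypeCost M) (twoTypeCap M) (phaseInstance N R h.le n) ≤
      (K'.filter fun j => ¬ (j / N) % 2 = p).card +
        M * ((Finset.range (n + 1)).filter fun i => i % 2 = p).card := by
    intro p hp
    refine OPT2_le_of_assignment _ _ _ (fun j => if (j / N) % 2 = p then j / N else j / N + 1) R
      ((Finset.filter_subset _ _).trans (Finset.filter_subset _ _)) ?_ ?_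
    · intro j hj hjW
      have hjn : j < n * N := Finset.mem_range.1 hj
      have hjn' := hdiv hjn
      have hwin := (phaseInstance N R h.le n).window j hj
      simp only [phaseInstance] at hwin ⊢
      by_cases hjp : (j / N) % 2 = p
      · simp only [if_pos hjp, Finset.mem_filter, Finset.mem_range]
        exact ⟨⟨by omega, hjp⟩, le_rfl, hwin⟩
      · simp only [if_neg hjp, Finset.mem_filter, Finset.mem_range]
        simp only [hK'def, Finset.mem_filter, Finset.mem_range, not_and, hjn, true_and, hjp,
          not_false_eq_true, not_true_eq_false, imp_false, not_lt] at hjW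
        exact ⟨⟨by omega, by omega⟩, h.mono (Nat.le_succ _), hjW⟩
    · intro i _
      have hsub : ((phaseInstance N R h.le n).jobs.filter fun j =>
          (if (j / N) % 2 = p then j / N else j / N + 1) = i) ⊆
          ((Finset.range (n * N)).filter fun j => j / N = i) ∪
            ((Finset.range (n * N)).filter fun j => j / N = i - 1) := by
        intro j hj
        rw [Finset.mem_filter] at hj
        rw [Finset.mem_union, Finset.mem_filter, Finset.mem_filter]
        have hj2 := hj.2
        split_ifs at hj2
        · exact Or.inl ⟨hj.1, hj2⟩
        · exact Or.inr ⟨hj.1, Nat.eq_sub_of_add_eq hj2⟩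
      have h1 := card_filter_phase_le N (n * N) i hN
      have h2 := card_filter_phase_le N (n * N) (i - 1) hN
      have h3 := (Finset.card_le_card hsub).trans (Finset.card_union_le _ _)
      omega
  have hparity : ∀ s : Finset ℕ, ∀ f : ℕ → ℕ,
      (s.filter fun j => f j % 2 = 0).card + (s.filter fun j => f j % 2 = 1).card = s.card := by
    intro s f
    rw [← Finset.card_filter_add_card_filter_not (s := s) fun j => f j % 2 = 0]
    simp only [Nat.mod_two_ne_zero]
  have hsmall := hparity K' fun j => j / N
  have hlarge := hparity (Finset.range (n + 1)) id
  have h0 := hopt 0 (by norm_num)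
  have h1 := hopt 1 (by norm_num)
  simp only [Nat.mod_two_ne_zero, Nat.mod_two_ne_one] at h0 h1
  simp only [id, Finset.card_range] at hlarge
  have hsmallR : ((K'.filter fun j => j / N % 2 = 0).card : ℝ) +
      (K'.filter fun j => j / N % 2 = 1).card ≤ K.card + n := by
    exact_mod_cast hsmall.le.trans hK'
  have hlargeR : (((Finset.range (n + 1)).filter fun i => i % 2 = 0).card : ℝ) +
      ((Finset.range (n + 1)).filter fun i => i % 2 = 1).card = n + 1 := by
    exact_mod_cast hlarge
  have hKnonneg : (0 : ℝ) ≤ K.card := Nat.cast_nonneg _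
  refine ⟨?_, by linarith⟩
  have hmul := congrArg (fun x : ℝ => (M : ℝ) * x) hlargeR
  simp only [mul_add, mul_one] at hmul
  linarith

/-- The lower bound, witnessed by an instance with at least one job. -/
theorem exists_nonempty_agreeable_two_sub_mul_OPT2_le {ε : ℝ} (hε : 0 < ε) {M : ℕ} (hM : 4 ≤ M)
    (hMε : 4 ≤ ε * M) {A : SchedInstance → Finset Batch} (hA : Causal A)
    (hvalid : ∀ P, ValidSchedule2 (twoTypeCap M) P (A P)) :
    ∃ P : SchedInstance, P.jobs.Nonempty ∧ Agreeable P ∧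
      (2 - ε) * OPT2 (twoTypeCost M) (twoTypeCap M) P ≤ schedCost (twoTypeCost M) (A P) := by
  have hN : 0 < 2 * M ^ 2 := by positivity
  have hNM : 2 * (2 * M ^ 2) ≤ M ^ 3 := by nlinarith [Nat.zero_le (M ^ 2)]
  have hne : ∀ R hR n, 0 < n → (phaseInstance (2 * M ^ 2) R hR n).jobs.Nonempty :=
    fun R hR n hn => Finset.nonempty_range_iff.2 (by positivity)
  have hM0 : (0 : ℝ) ≤ M := Nat.cast_nonneg M
  by_contra! hno
  have hpattern : ∀ n ≤ M, ∃ R, LargeBatchPattern A (2 * M ^ 2) R n := by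
    intro n
    induction n with
    | zero =>
      exact fun _ => ⟨fun _ => 0, monotone_const, fun i => by positivity, by simp, by simp,
        by simp⟩
    | succ n ih =>
      intro hn
      obtain ⟨R, hR⟩ := ih (by omega)
      refine (hR.step hA hvalid hN).resolve_right fun hcost => ?_
      have hlt := hno _ (hne R hR.le (n + 1) (by omega))
        (agreeable_phaseInstance hR.le hR.mono (n + 1))
      have hopt := OPT2_phaseInstance_le (M := M) hR.le (n + 1) hN (by omega)
      have hopt0 := OPT2_nonneg M (twoTypeCap M) (phaseInstance (2 * M ^ 2) R hR.le (n + 1))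
      have hnM : ((n + 1 : ℕ) : ℝ) ≤ M := by exact_mod_cast hn
      push_cast at hcost hopt hnM
      nlinarith [mul_le_mul_of_nonneg_left hnM hM0, mul_nonneg hε.le hopt0]
  obtain ⟨R, hR⟩ := hpattern M le_rfl
  have hlt := hno _ (hne R hR.le M (by omega)) (agreeable_phaseInstance hR.le hR.mono M)
  obtain ⟨h1, h2⟩ := hR.two_mul_OPT2_le hvalid hN hNM
  have hopt0 := OPT2_nonneg M (twoTypeCap M) (phaseInstance (2 * M ^ 2) R hR.le M)
  set opt := OPT2 (twoTypeCost M) (twoTypeCap M) (phaseInstance (2 * M ^ 2) R hR.le M)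
  have hεopt : ε * opt < 2 * M := by linarith
  have hbig : ε * (2 * opt) < ε * (M * M) := by nlinarith
  have := lt_of_mul_lt_mul_left hbig hε.le
  nlinarith [mul_nonneg hε.le hopt0]

/-- no deterministic online algorithm has competitive ratio below 2.
For every ε > 0 there are an even integer M and a two-type machine configuration
(type 0: cost 1, capacity 1; type 1: cost M, capacity M³) such that every causal
algorithm producing valid schedules has, on some agreeable instance J,
cost at least (2 − ε)·OPT(J). -/
theorem online_lower_bound_two :
    ∀ ε : ℝ, 0 < ε →
      ∃ M : ℕ, Even M ∧ 0 < M ∧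
        ∀ A : SchedInstance → Finset Batch,
          Causal A →
          (∀ P : SchedInstance,
            ValidSchedule2 (fun k => if k = 0 then 1 else M ^ 3) P (A P)) →
          ∃ P : SchedInstance, Agreeable P ∧
            (2 - ε) * OPT2 (fun k => if k = 0 then (1 : ℝ) else (M : ℝ))
                (fun k => if k = 0 then 1 else M ^ 3) P
              ≤ schedCost (fun k => if k = 0 then (1 : ℝ) else (M : ℝ)) (A P) := by
  intro ε hε
  have hceil : 4 / ε ≤ (2 * (⌈4 / ε⌉₊ + 2) : ℕ) := by
    have := Nat.le_ceil (4 / ε)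
    push_cast
    have : (0 : ℝ) ≤ ⌈4 / ε⌉₊ := Nat.cast_nonneg _
    linarith
  refine ⟨2 * (⌈4 / ε⌉₊ + 2), even_two_mul _, by omega, fun A hA hvalid => ?_⟩
  obtain ⟨P, -, hP⟩ := exists_nonempty_agreeable_two_sub_mul_OPT2_le hε (by omega)
    ((div_le_iff₀' hε).1 hceil) hA hvalid
  exact ⟨P, hP⟩
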